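/- (Normal cone lemma.) Let x̂ ∈ X and assume that Q(g)^r_d is a closed subset of the finite-dimensional space ℝ[x]_d. Then the following two sets of polynomials coincide: {f ∈ ℝ[x]_d : f ∈ Q(g)^r_d and f(x̂) = 0} = {f ∈ ℝ[x]_d : ℓ(f) ≥ f(x̂) for every ℓ ∈ R(g)^r_d}; i.e., S_x̂(g)^r_d equals the negative of the normal cone to the moment relaxation R(g)^r_d at the evaluation functional at x̂. -/

import Mathlib

open MvPolynomial

/-- A multivariate polynomial is a sum of squares (SOS). -/
def IsSOS {n : ℕ} (p : MvPolynomial (Fin n) ℝ) : Prop :=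
  ∃ (k : ℕ) (q : Fin k → MvPolynomial (Fin n) ℝ), p = ∑ i, (q i) ^ 2

/-- The extended family of constraint polynomials, with `g₀ := 1`. -/
noncomputable def gext {n m : ℕ} (g : Fin m → MvPolynomial (Fin n) ℝ) : Fin (m + 1) → MvPolynomial (Fin n) ℝ :=
  Fin.cons 1 g

/-- The truncated quadratic module `Q(g)^r_d`, with `g₀ := 1`. -/
def Qmod {n m : ℕ} (g : Fin m → MvPolynomial (Fin n) ℝ) (r d : ℕ) :
    Set (MvPolynomial (Fin n) ℝ) :=
  {p | p.totalDegree ≤ d ∧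
    ∃ s : Fin (m + 1) → MvPolynomial (Fin n) ℝ,
      (∀ i, IsSOS (s i)) ∧
      (∀ i, (s i * gext g i).totalDegree ≤ 2 * r) ∧
      p = ∑ i, s i * gext g i}

/-- The basic semialgebraic set `X = {x ∈ ℝⁿ : gᵢ(x) ≥ 0, i = 1,…,m}`. -/
def semiSetX {n m : ℕ} (g : Fin m → MvPolynomial (Fin n) ℝ) : Set (Fin n → ℝ) :=
  {x | ∀ i, 0 ≤ eval x (g i)}

/-- The moment relaxation `R(g)^r_d`: linear functionals nonnegative on `Q(g)^r_d`. -/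
def Rmom {n m : ℕ} (g : Fin m → MvPolynomial (Fin n) ℝ) (r d : ℕ) :
    Set (MvPolynomial (Fin n) ℝ →ₗ[ℝ] ℝ) :=
  {ℓ | ∀ q ∈ Qmod g r d, 0 ≤ ℓ q}

/-- The optimal value `v(f) = inf_{x ∈ X} f(x)` of the POP. -/
noncomputable def vPOP {n m : ℕ} (g : Fin m → MvPolynomial (Fin n) ℝ)
    (f : MvPolynomial (Fin n) ℝ) : ℝ :=
  sInf ((fun x => eval x f) '' semiSetX g)

/-- The relaxed value `v^r(f) = sup {v : f - v ∈ Q(g)^r_d}`. -/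
noncomputable def vRel {n m : ℕ} (g : Fin m → MvPolynomial (Fin n) ℝ) (r d : ℕ)
    (f : MvPolynomial (Fin n) ℝ) : ℝ :=
  sSup {w : ℝ | f - C w ∈ Qmod g r d}

/-- The exactness cone `F(g)^r_d`. -/
def Fcone {n m : ℕ} (g : Fin m → MvPolynomial (Fin n) ℝ) (r d : ℕ) :
    Set (MvPolynomial (Fin n) ℝ) :=
  {f | f.totalDegree ≤ d ∧
    ∃ ℓ ∈ Rmom g r d, ∃ v : ℝ,
      ℓ 1 = 1 ∧ ℓ f = v ∧ v = vPOP g f ∧ f - C v ∈ Qmod g r d}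

/-!
Evaluation `f ↦ ℓ f` is linear in `ℓ`, and a linear form attains its minimum over a cone at a given
point of the cone if and only if it is nonnegative on the cone and vanishes at that point. Since
`x̂ ∈ X`, evaluation at `x̂` is a point of the cone `R(g)^r_d`, so `ℓ(f) ≥ f(x̂)` on `R(g)^r_d` means
that `f(x̂) = 0` and that `f` lies in the bidual cone of `Q(g)^r_d`. By Hahn–Banach separation the
closed cone `Q(g)^r_d` is its own bidual.
-/

section Cone

theorem forall_mem_map_le_iff {M A S F : Type*} [AddMonoid M] [SetLike S M]
    [AddSubmonoidClass S M] [AddCommGroup A] [PartialOrder A] [IsOrderedAddMonoid A]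
    [FunLike F M A] [AddMonoidHomClass F M A] {D : S} (φ : F) {x : M} (hx : x ∈ D) :
    (∀ y ∈ D, φ x ≤ φ y) ↔ (∀ y ∈ D, 0 ≤ φ y) ∧ φ x = 0 := by
  refine ⟨fun hmin => ?_, fun ⟨hnonneg, hφx⟩ y hy => hφx.trans_le (hnonneg y hy)⟩
  have hle : φ x ≤ 0 := by simpa only [map_zero] using hmin 0 (zero_mem D)
  have hge : 0 ≤ φ x := by
    simpa only [map_add, le_add_iff_nonneg_right] using hmin (x + x) (add_mem hx hx)
  have hφx : φ x = 0 := hle.antisymm hge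
  exact ⟨fun y hy => hφx ▸ hmin y hy, hφx⟩

variable {E W V : Type*}
  [AddCommGroup E] [Module ℝ E] [TopologicalSpace E] [IsTopologicalAddGroup E]
  [ContinuousSMul ℝ E] [LocallyConvexSpace ℝ E]
  [AddCommGroup W] [Module ℝ W] [AddCommGroup V] [Module ℝ V]

theorem exists_mem_dual_neg_of_isClosed_image (K : PointedCone ℝ W) {e : W →ₗ[ℝ] E}
    (he : Function.Injective e) (hclosed : IsClosed (e '' K)) {w : W} (hw : w ∉ K) :
    ∃ ℓ ∈ PointedCone.dual (Module.Dual.eval ℝ W) (K : Set W), ℓ w < 0 := by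
  let image : ProperCone ℝ E := ⟨K.map e, hclosed⟩
  have hew : e w ∉ image := fun h => hw (he.mem_set_image.1 h)
  obtain ⟨u, hu_nonneg, hu_neg⟩ := image.hyperplane_separation_point hew
  exact ⟨u.toLinearMap ∘ₗ e, fun v hv => hu_nonneg (e v) ⟨v, hv, rfl⟩, hu_neg⟩

theorem mem_iff_forall_mem_dual_nonneg (C : PointedCone ℝ V) {L : Submodule ℝ V}
    (hCL : (C : Set V) ⊆ L) {e : L →ₗ[ℝ] E} (he : Function.Injective e)
    (hclosed : IsClosed (e '' {v | (v : V) ∈ C})) {x : V} :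
    x ∈ C ↔ x ∈ L ∧ ∀ ℓ ∈ PointedCone.dual (Module.Dual.eval ℝ V) (C : Set V), 0 ≤ ℓ x := by
  refine ⟨fun hx => ⟨hCL hx, fun ℓ hℓ => hℓ hx⟩, fun ⟨hxL, hnonneg⟩ => ?_⟩
  by_contra hxC
  obtain ⟨ℓ, hℓ, hℓx⟩ := exists_mem_dual_neg_of_isClosed_image
    (C.comap (L.subtype.restrictScalars _)) he hclosed (w := ⟨x, hxL⟩) hxC
  obtain ⟨ℓ', hℓ'⟩ := ℓ.exists_extend
  have hextend (v : L) : ℓ' v = ℓ v := LinearMap.congr_fun hℓ' v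
  have hdual : ℓ' ∈ PointedCone.dual (Module.Dual.eval ℝ V) (C : Set V) := fun y hy =>
    (hℓ (x := ⟨y, hCL hy⟩) hy).trans_eq (hextend ⟨y, hCL hy⟩).symm
  exact (hnonneg ℓ' hdual).not_gt ((hextend ⟨x, hxL⟩).trans_lt hℓx)

end Cone

section SumOfSquares

variable {n : ℕ} {p q : MvPolynomial (Fin n) ℝ}

theorem isSOS_zero : IsSOS (0 : MvPolynomial (Fin n) ℝ) :=
  ⟨0, Fin.elim0, by rw [Fin.sum_univ_zero]⟩

theorem IsSOS.add (hp : IsSOS p) (hq : IsSOS q) : IsSOS (p + q) := by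
  obtain ⟨k, a, rfl⟩ := hp
  obtain ⟨l, b, rfl⟩ := hq
  exact ⟨k + l, Fin.append a b, by simp [Fin.sum_univ_add]⟩

theorem IsSOS.smul (hp : IsSOS p) {c : ℝ} (hc : 0 ≤ c) : IsSOS (c • p) := by
  obtain ⟨k, a, rfl⟩ := hp
  exact ⟨k, fun i => √c • a i, by simp [Finset.smul_sum, smul_pow, Real.sq_sqrt hc]⟩

theorem IsSOS.eval_nonneg (hp : IsSOS p) (x : Fin n → ℝ) : 0 ≤ eval x p := by
  obtain ⟨k, a, rfl⟩ := hp
  simpa only [map_sum, map_pow] using Finset.sum_nonneg fun i _ => sq_nonneg (eval x (a i))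

end SumOfSquares

section QuadraticModule

variable {n m : ℕ} {g : Fin m → MvPolynomial (Fin n) ℝ} {r d : ℕ}
  {p q : MvPolynomial (Fin n) ℝ} {x : Fin n → ℝ}

theorem zero_mem_Qmod : 0 ∈ Qmod g r d :=
  ⟨by simp, 0, fun _ => isSOS_zero, by simp, by simp⟩

theorem add_mem_Qmod (hp : p ∈ Qmod g r d) (hq : q ∈ Qmod g r d) : p + q ∈ Qmod g r d := by
  obtain ⟨hpd, s, hs, hsd, rfl⟩ := hp
  obtain ⟨hqd, t, ht, htd, rfl⟩ := hq
  refine ⟨(totalDegree_add _ _).trans (max_le hpd hqd), s + t,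
    fun i => (hs i).add (ht i), fun i => ?_, ?_⟩
  · rw [Pi.add_apply, add_mul]
    exact (totalDegree_add _ _).trans (max_le (hsd i) (htd i))
  · simp only [Pi.add_apply, add_mul, Finset.sum_add_distrib]

theorem smul_mem_Qmod {c : ℝ} (hc : 0 ≤ c) (hp : p ∈ Qmod g r d) : c • p ∈ Qmod g r d := by
  obtain ⟨hpd, s, hs, hsd, rfl⟩ := hp
  refine ⟨(totalDegree_smul_le _ _).trans hpd, c • s,
    fun i => (hs i).smul hc, fun i => ?_, ?_⟩
  · rw [Pi.smul_apply, smul_mul_assoc]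
    exact (totalDegree_smul_le _ _).trans (hsd i)
  · simp only [Pi.smul_apply, smul_mul_assoc, Finset.smul_sum]

/-- The truncated quadratic module `Q(g)^r_d` bundled as a pointed cone, so that the duality theory
of cones applies to it. -/
def Qcone (g : Fin m → MvPolynomial (Fin n) ℝ) (r d : ℕ) :
    PointedCone ℝ (MvPolynomial (Fin n) ℝ) where
  carrier := Qmod g r d
  zero_mem' := zero_mem_Qmod
  add_mem' := add_mem_Qmod
  smul_mem' c _ hp := smul_mem_Qmod c.2 hp

theorem Qcone_subset_restrictTotalDegree :
    (Qcone g r d : Set (MvPolynomial (Fin n) ℝ)) ⊆ restrictTotalDegree (Fin n) ℝ d :=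
  fun p hp => (mem_restrictTotalDegree (Fin n) d p).2 hp.1

theorem dual_Qcone_eq_Rmom :
    (PointedCone.dual (Module.Dual.eval ℝ (MvPolynomial (Fin n) ℝ)) (Qcone g r d : Set _) :
      Set (Module.Dual ℝ (MvPolynomial (Fin n) ℝ))) = Rmom g r d :=
  rfl

theorem eval_gext_nonneg (hx : x ∈ semiSetX g) (i : Fin (m + 1)) : 0 ≤ eval x (gext g i) := by
  cases i using Fin.cases with
  | zero => simp [gext]
  | succ j => simpa only [gext, Fin.cons_succ] using hx j

theorem eval_nonneg_of_mem_Qmod (hp : p ∈ Qmod g r d) (hx : x ∈ semiSetX g) :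
    0 ≤ eval x p := by
  obtain ⟨-, s, hs, -, rfl⟩ := hp
  simpa only [map_sum, map_mul] using
    Finset.sum_nonneg fun i _ => mul_nonneg ((hs i).eval_nonneg x) (eval_gext_nonneg hx i)

theorem aeval_mem_Rmom (hx : x ∈ semiSetX g) :
    (aeval x : MvPolynomial (Fin n) ℝ →ₐ[ℝ] ℝ).toLinearMap ∈ Rmom g r d :=
  fun _ hp => eval_nonneg_of_mem_Qmod hp hx

end QuadraticModule

theorem stmt10_general {n m : ℕ} (g : Fin m → MvPolynomial (Fin n) ℝ) (r d : ℕ)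
    {ℓ₀ : MvPolynomial (Fin n) ℝ →ₗ[ℝ] ℝ} (hℓ₀ : ℓ₀ ∈ Rmom g r d)
    {E : Type*} [AddCommGroup E] [Module ℝ E] [TopologicalSpace E] [IsTopologicalAddGroup E]
    [ContinuousSMul ℝ E] [LocallyConvexSpace ℝ E]
    {e : restrictTotalDegree (Fin n) ℝ d →ₗ[ℝ] E} (he : Function.Injective e)
    (hclosed : IsClosed (e '' {p | (p : MvPolynomial (Fin n) ℝ) ∈ Qmod g r d})) :
    {f | f ∈ Qmod g r d ∧ ℓ₀ f = 0}
      = {f | f.totalDegree ≤ d ∧ ∀ ℓ ∈ Rmom g r d, ℓ₀ f ≤ ℓ f} := by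
  ext f
  have hbidual : f ∈ Qmod g r d ↔ f.totalDegree ≤ d ∧ ∀ ℓ ∈ Rmom g r d, 0 ≤ ℓ f := by
    rw [← mem_restrictTotalDegree]
    exact mem_iff_forall_mem_dual_nonneg (Qcone g r d) Qcone_subset_restrictTotalDegree he hclosed
  have hmin : (∀ ℓ ∈ Rmom g r d, ℓ₀ f ≤ ℓ f) ↔ (∀ ℓ ∈ Rmom g r d, 0 ≤ ℓ f) ∧ ℓ₀ f = 0 := by
    rw [← dual_Qcone_eq_Rmom] at hℓ₀ ⊢
    exact forall_mem_map_le_iff (Module.Dual.eval ℝ _ f) hℓ₀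
  simp only [Set.mem_ofPred_eq]
  rw [hbidual, hmin, and_assoc]

/-- Normal cone lemma: let `xhat ∈ X` and assume `Q(g)^r_d` is a closed
subset of the finite-dimensional space `ℝ[x]_d` (closedness is expressed through a linear
coordinate identification `e` of `ℝ[x]_d` with `ℝ^N`; this does not depend on the choice
of `e`). Then `S_xhat(g)^r_d = {f ∈ Q(g)^r_d : f(xhat) = 0}` coincides with the set
`{f ∈ ℝ[x]_d : ℓ(f) ≥ f(xhat) for all ℓ ∈ R(g)^r_d}`, i.e. with the negative of the
normal cone to `R(g)^r_d` at the evaluation functional at `xhat`. -/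
theorem stmt10 {n m : ℕ} (g : Fin m → MvPolynomial (Fin n) ℝ) (r d : ℕ)
    (xhat : Fin n → ℝ) (hxhat : xhat ∈ semiSetX g)
    (N : ℕ)
    (e : MvPolynomial.restrictTotalDegree (Fin n) ℝ d ≃ₗ[ℝ] (Fin N → ℝ))
    (hclosed : IsClosed
      (⇑e '' {p : MvPolynomial.restrictTotalDegree (Fin n) ℝ d |
        (p : MvPolynomial (Fin n) ℝ) ∈ Qmod g r d})) :
    {f | f ∈ Qmod g r d ∧ eval xhat f = 0}
      = {f : MvPolynomial (Fin n) ℝ |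
          f.totalDegree ≤ d ∧ ∀ ℓ ∈ Rmom g r d, eval xhat f ≤ ℓ f} :=
  stmt10_general g r d (aeval_mem_Rmom hxhat) (e := e.toLinearMap) e.injective hclosed
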